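/- The shuffle product of streams is associative and distributes over pointwise addition: for all streams x, y, z : Stream' ℕ, x ⊗ (y ⊕ z) = (x ⊗ y) ⊕ (x ⊗ z) and (x ⊗ y) ⊗ z = x ⊗ (y ⊗ z). -/

import Mathlib

open Stream'

/-- Pointwise addition of streams. -/
def sadd (xs ys : Stream' ℕ) : Stream' ℕ := fun n => xs.get n + ys.get n

/-- Shuffle product of streams (binomial convolution). -/
def sshuffle (xs ys : Stream' ℕ) : Stream' ℕ :=
  fun n => ∑ k ∈ Finset.range (n + 1), n.choose k * xs.get k * ys.get (n - k)

infixl:65 " ⊕ " => sadd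
infixl:70 " ⊗ " => sshuffle

/-!
The exponential generating function `∑ xₙ Xⁿ / n!` is injective on streams of natural numbers and
turns pointwise addition and the shuffle product into addition and multiplication of formal power
series: `n.choose k / n! = 1 / (k! * (n - k)!)`, so dividing by `n!` makes the binomial convolution
an ordinary one. The laws therefore descend from the ring `ℚ⟦X⟧`.
-/

open Finset PowerSeries
open scoped Nat

theorem get_sadd (x y : Stream' ℕ) (n : ℕ) : (x ⊕ y).get n = x.get n + y.get n :=
  rfl

theorem get_sshuffle (x y : Stream' ℕ) (n : ℕ) :
    (x ⊗ y).get n = ∑ k ∈ range (n + 1), n.choose k * x.get k * y.get (n - k) :=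
  rfl

/-- The exponential generating function `∑ xₙ Xⁿ / n!` of a stream. The coefficients are taken in
`ℚ`, where factorials are invertible. -/
noncomputable def egf (x : Stream' ℕ) : ℚ⟦X⟧ :=
  PowerSeries.mk fun n ↦ (x.get n : ℚ) / n !

theorem coeff_egf (x : Stream' ℕ) (n : ℕ) : coeff n (egf x) = (x.get n : ℚ) / n ! :=
  coeff_mk _ _

theorem egf_injective : Function.Injective egf := by
  intro x y h
  ext n
  have hcoeff : (x.get n : ℚ) / n ! = y.get n / n ! := by
    rw [← coeff_egf, ← coeff_egf, h]
  have hfactorial : (n ! : ℚ) ≠ 0 := Nat.cast_ne_zero.mpr n.factorial_ne_zero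
  exact_mod_cast (div_left_inj' hfactorial).mp hcoeff

theorem egf_sadd (x y : Stream' ℕ) : egf (x ⊕ y) = egf x + egf y := by
  ext n
  rw [map_add, coeff_egf, coeff_egf, coeff_egf, get_sadd, Nat.cast_add, add_div]

theorem choose_mul_mul_div_factorial {K : Type*} [Field K] [CharZero K] {n k : ℕ} (hk : k ≤ n)
    (a b : K) : n.choose k * a * b / n ! = a / k ! * (b / (n - k)!) := by
  have hn : (n ! : K) ≠ 0 := Nat.cast_ne_zero.mpr n.factorial_ne_zero
  rw [Nat.cast_choose K hk]
  field_simp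

theorem egf_sshuffle (x y : Stream' ℕ) : egf (x ⊗ y) = egf x * egf y := by
  ext n
  calc coeff n (egf (x ⊗ y))
      = ∑ k ∈ range (n + 1), (n.choose k * x.get k * y.get (n - k) : ℚ) / n ! := by
        rw [coeff_egf, get_sshuffle, Nat.cast_sum, sum_div]
        simp only [Nat.cast_mul]
    _ = ∑ k ∈ range (n + 1), (x.get k : ℚ) / k ! * (y.get (n - k) / (n - k)!) :=
        sum_congr rfl fun k hk ↦ choose_mul_mul_div_factorial (mem_range_succ_iff.mp hk) _ _
    _ = coeff n (egf x * egf y) := by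
        simp only [coeff_mul, coeff_egf, Nat.sum_antidiagonal_eq_sum_range_succ_mk]

theorem sshuffle_sadd (x y z : Stream' ℕ) : x ⊗ (y ⊕ z) = (x ⊗ y) ⊕ (x ⊗ z) :=
  egf_injective <| by simp only [egf_sshuffle, egf_sadd, mul_add]

theorem sshuffle_assoc (x y z : Stream' ℕ) : (x ⊗ y) ⊗ z = x ⊗ (y ⊗ z) :=
  egf_injective <| by simp only [egf_sshuffle, mul_assoc]

theorem stmt_9 :
    ∀ x y z : Stream' ℕ,
      x ⊗ (y ⊕ z) = (x ⊗ y) ⊕ (x ⊗ z) ∧ (x ⊗ y) ⊗ z = x ⊗ (y ⊗ z) := by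
  intro x y z
  exact ⟨sshuffle_sadd x y z, sshuffle_assoc x y z⟩
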